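/- Let S be a nonnegative symmetric Borel measure on ℝ^d with ∫_{ℝ^d}(1+‖u‖)^{−d−1} dS(u) < ∞ and let s be the Radon–Nikodym derivative of S with respect to Lebesgue measure. Assume s is determining: the only function ψ : ℝ^d → ℂ that extends to an entire (holomorphic) function on ℂ^d and satisfies ∫_{ℝ^d} |ψ(u)|²/s(u) du < ∞ (with the convention that the integrand is +∞ wherever s(u) = 0 and ψ(u) ≠ 0) is ψ ≡ 0. Then S induces linear maximal rigidity on every bounded Borel set A ⊆ ℝ^d. -/

import Mathlib

open MeasureTheory Complex
open scoped ENNReal NNReal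
open scoped RealInnerProductSpace

noncomputable section

abbrev Ed (d : ℕ) := EuclideanSpace ℝ (Fin d)

/-- Fourier transform `f̂(u) = ∫ e^{-i⟨u,x⟩} f(x) dx`. -/
def FT {d : ℕ} (f : Ed d → ℂ) (u : Ed d) : ℂ :=
  ∫ x : Ed d, Complex.exp (-Complex.I * (⟪u, x⟫ : ℝ)) * f x

/-- `f` is bounded, measurable, with bounded support contained in `A`. -/
def IsCBS {d : ℕ} (A : Set (Ed d)) (f : Ed d → ℂ) : Prop :=
  Measurable f ∧ (∃ C : ℝ, ∀ x, ‖f x‖ ≤ C) ∧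
    Bornology.IsBounded (Function.support f) ∧ Function.support f ⊆ A

/-- `S` induces linear maximal rigidity on `A`. -/
def LMR {d : ℕ} (S : Measure (Ed d)) (A : Set (Ed d)) : Prop :=
  ∀ f : Ed d → ℂ, IsCBS A f → ∀ ε : ℝ, 0 < ε →
    ∃ h : Ed d → ℂ, IsCBS Aᶜ h ∧ (∫ u, ‖FT f u - FT h u‖ ^ 2 ∂S) < ε

open Filter Topology

lemma fderiv_bd {d : ℕ} {F : (Fin d → ℂ) → ℂ} (hF : Differentiable ℂ F) {ρ b : ℝ}
    (hb : ∀ z, ‖z‖ ≤ ρ + 1 → ‖F z‖ ≤ b) {z : Fin d → ℂ} (hz : ‖z‖ ≤ ρ) :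
    ‖fderiv ℂ F z‖ ≤ b := by
  have hb0 : 0 ≤ b := (norm_nonneg _).trans (hb z (by linarith))
  refine ContinuousLinearMap.opNorm_le_bound _ hb0 fun v => ?_
  rcases eq_or_ne v 0 with rfl | hv
  · simp
  have hv' : 0 < ‖v‖ := norm_pos_iff.2 hv
  have hl : ∀ t : ℂ, HasDerivAt (fun t : ℂ => z + t • v) v t := fun t => by
    simpa using ((hasDerivAt_id t).smul_const v).const_add z
  have h1 : HasDerivAt (fun t : ℂ => F (z + t • v)) (fderiv ℂ F z v) 0 := by
    have := (hF (z + (0:ℂ) • v)).hasFDerivAt.comp_hasDerivAt (0:ℂ) (hl 0)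
    simpa [Function.comp_def] using this
  have h2 : Differentiable ℂ (fun t : ℂ => F (z + t • v)) :=
    hF.comp fun t => (hl t).differentiableAt
  have h3 := Complex.norm_deriv_le_of_forall_mem_sphere_norm_le (c := 0) (R := ‖v‖⁻¹) (C := b)
    (f := fun t : ℂ => F (z + t • v)) (by positivity) h2.diffContOnCl (by
      intro t ht
      apply hb
      have ht' : ‖t‖ = ‖v‖⁻¹ := by simpa using ht
      calc ‖z + t • v‖ ≤ ‖z‖ + ‖t • v‖ := norm_add_le _ _
        _ ≤ ρ + 1 := by rw [norm_smul, ht', inv_mul_cancel₀ hv'.ne']; linarith)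
  rw [h1.deriv] at h3
  simpa using h3

lemma hol_int {d : ℕ} (μ : Measure (Ed d)) (w : Ed d → ℂ) (hw : AEStronglyMeasurable w μ)
    (G : Ed d → (Fin d → ℂ) → ℂ) (hGc : Continuous (Function.uncurry G))
    (hGd : ∀ a, Differentiable ℂ (G a))
    (hb : ∀ ρ : ℝ, ∃ b : Ed d → ℝ, Integrable b μ ∧
      ∀ a z, ‖z‖ ≤ ρ → ‖w a * G a z‖ ≤ b a) :
    Differentiable ℂ (fun z => ∫ a, w a * G a z ∂μ) := by
  intro z₀
  obtain ⟨b, hbi, hb⟩ := hb (‖z₀‖ + 1 + 1)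
  have hGm : ∀ z, AEStronglyMeasurable (fun a => w a * G a z) μ := fun z =>
    hw.mul (hGc.comp (by fun_prop : Continuous fun a => (a, z))).aestronglyMeasurable
  refine (hasFDerivAt_integral_of_dominated_of_fderiv_le (𝕜 := ℂ) (s := Metric.ball z₀ 1)
    (F' := fun z a => w a • fderiv ℂ (G a) z) (bound := b) (Metric.ball_mem_nhds _ one_pos)
    (Eventually.of_forall hGm) ?_ ?_ ?_ hbi ?_).differentiableAt
  · exact hbi.mono' (hGm z₀) (Eventually.of_forall fun a => hb a z₀ (by linarith))
  · refine hw.smul ?_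
    exact ((measurable_fderiv_with_param ℂ hGc).comp
      (measurable_id.prodMk measurable_const : Measurable fun a : Ed d => (a, z₀))).aestronglyMeasurable
  · refine Eventually.of_forall fun a z hz => ?_
    have hz' : ‖z‖ ≤ ‖z₀‖ + 1 := by
      have : ‖z - z₀‖ < 1 := by simpa [dist_eq_norm] using hz
      have := norm_sub_norm_le z z₀
      linarith
    have h := fderiv_bd (F := fun z => w a * G a z) ((hGd a).const_mul (w a)) (ρ := ‖z₀‖ + 1)
      (b := b a) (hb a) hz'
    rwa [fderiv_const_mul (hGd a z)] at h
  · refine Eventually.of_forall fun a z hz => ?_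
    exact ((hGd a z).hasFDerivAt).const_mul (w a)

/-- bilinear pairing of a complex vector and a real vector -/
def pr {d : ℕ} (ζ : Fin d → ℂ) (x : Ed d) : ℂ := ∑ j, ζ j * ((x j : ℝ) : ℂ)

/-- Fourier–Laplace transform. -/
def XX {d : ℕ} (χ : Ed d → ℂ) (ζ : Fin d → ℂ) : ℂ :=
  ∫ x : Ed d, χ x * Complex.exp (-(2 * Real.pi * Complex.I) * pr ζ x)

lemma norm_exp_pr {d : ℕ} {ζ : Fin d → ℂ} {x : Ed d} {ρ R : ℝ} (hR : ‖x‖ ≤ R)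
    (hζ : ∀ j, |(ζ j).im| ≤ ρ) :
    ‖Complex.exp (-(2 * Real.pi * Complex.I) * pr ζ x)‖ ≤ Real.exp (2 * Real.pi * (d * (ρ * R))) := by
  rw [Complex.norm_exp]
  apply Real.exp_le_exp.2
  have h1 : (-(2 * Real.pi * Complex.I) * pr ζ x).re = 2 * Real.pi * (pr ζ x).im := by
    simp
  rw [h1]
  gcongr
  unfold pr
  rw [Complex.im_sum]
  have : ∀ j ∈ Finset.univ, (ζ j * ((x j : ℝ) : ℂ)).im ≤ ρ * R := by
    intro j _
    rw [Complex.im_mul_ofReal]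
    have hx : |x j| ≤ R := by
      have := EuclideanSpace.norm_eq x ▸ (PiLp.norm_apply_le x j)
      exact le_trans (by simpa using PiLp.norm_apply_le x j) hR
    calc (ζ j).im * x j ≤ |(ζ j).im * x j| := le_abs_self _
      _ = |(ζ j).im| * |x j| := abs_mul _ _
      _ ≤ ρ * R := mul_le_mul (hζ j) hx (abs_nonneg _) ((abs_nonneg _).trans (hζ j))
  calc _ ≤ ∑ j : Fin d, ρ * R := Finset.sum_le_sum this
    _ = d * (ρ * R) := by simp

lemma cont_pr {d : ℕ} : Continuous (fun p : Ed d × (Fin d → ℂ) => pr p.2 p.1) := by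
  unfold pr; fun_prop

lemma cs_bd {d : ℕ} {χ : Ed d → ℂ} (hs : HasCompactSupport χ) :
    ∃ R : ℝ, 0 ≤ R ∧ ∀ x, χ x ≠ 0 → ‖x‖ ≤ R := by
  obtain ⟨R, hR⟩ := hs.isCompact.isBounded.subset_closedBall (0 : Ed d)
  refine ⟨max R 0, le_max_right _ _, fun x hx => ?_⟩
  have := hR (subset_tsupport χ hx)
  exact le_max_of_le_left (by simpa using this)

lemma XX_diff {d : ℕ} {χ : Ed d → ℂ} (hc : Continuous χ) (hs : HasCompactSupport χ) :
    Differentiable ℂ (XX χ) := by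
  obtain ⟨R, hR0, hR⟩ := cs_bd hs
  refine hol_int volume χ hc.aestronglyMeasurable
    (fun x ζ => Complex.exp (-(2 * Real.pi * Complex.I) * pr ζ x)) ?_ ?_ ?_
  · have := cont_pr (d := d)
    exact Complex.continuous_exp.comp (continuous_const.mul this)
  · intro x; unfold pr; fun_prop
  · intro ρ
    refine ⟨fun x => ‖χ x‖ * Real.exp (2 * Real.pi * (d * (ρ * R))),
      (hc.integrable_of_hasCompactSupport hs).norm.mul_const _, fun x z hz => ?_⟩
    by_cases hx : χ x = 0
    · simp [hx]
    rw [norm_mul]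
    refine mul_le_mul_of_nonneg_left ?_ (norm_nonneg _)
    exact norm_exp_pr (hR x hx) fun j => (Complex.abs_im_le_norm _).trans ((norm_le_pi_norm z j).trans hz)

lemma XX_bd0 {d : ℕ} {χ : Ed d → ℂ} (hc : Continuous χ) (hs : HasCompactSupport χ) (ρ : ℝ) :
    ∃ C : ℝ, ∀ ζ : Fin d → ℂ, (∀ j, |(ζ j).im| ≤ ρ) → ‖XX χ ζ‖ ≤ C := by
  obtain ⟨R, hR0, hR⟩ := cs_bd hs
  refine ⟨∫ x, ‖χ x‖ * Real.exp (2 * Real.pi * (d * (ρ * R))), fun ζ hζ => ?_⟩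
  refine norm_integral_le_of_norm_le
    ((hc.integrable_of_hasCompactSupport hs).norm.mul_const _) (Eventually.of_forall fun x => ?_)
  by_cases hx : χ x = 0
  · simp [hx]
  rw [norm_mul]
  gcongr
  exact norm_exp_pr (hR x hx) hζ

lemma XX_parts {d : ℕ} {χ : Ed d → ℂ} (hc : ContDiff ℝ (⊤ : ℕ∞) χ) (hs : HasCompactSupport χ) (j : Fin d)
    (ζ : Fin d → ℂ) :
    XX (fun x => fderiv ℝ χ x (EuclideanSpace.single j 1)) ζ = (2 * Real.pi * Complex.I) * ζ j * XX χ ζ := by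
  set v : Ed d := EuclideanSpace.single j 1 with hv
  set e : Ed d → ℂ := fun x => Complex.exp (-(2 * Real.pi * Complex.I) * pr ζ x) with he
  have hed : ∀ x, HasFDerivAt (𝕜 := ℝ) e (e x • (-(2 * Real.pi * Complex.I)) •
      ∑ i, ζ i • (Complex.ofRealCLM.comp (EuclideanSpace.proj i : Ed d →L[ℝ] ℝ))) x := by
    intro x
    have h1 : HasFDerivAt (𝕜 := ℝ) (fun x : Ed d => pr ζ x)
        (∑ i, ζ i • (Complex.ofRealCLM.comp (EuclideanSpace.proj i : Ed d →L[ℝ] ℝ))) x := by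
      unfold pr
      refine HasFDerivAt.fun_sum fun i _ => ?_
      exact ((Complex.ofRealCLM.comp (EuclideanSpace.proj i : Ed d →L[ℝ] ℝ)).hasFDerivAt).const_mul (ζ i)
    exact (h1.const_mul _).cexp
  have hev : ∀ x, fderiv ℝ e x v = e x * (-(2 * Real.pi * Complex.I) * ζ j) := by
    intro x
    rw [(hed x).fderiv]
    simp [hv, apply_ite]
  have hec : Continuous e := Complex.continuous_exp.comp
    (continuous_const.mul ((cont_pr (d := d)).comp (by fun_prop : Continuous fun x : Ed d => (x, ζ))))
  have hχ' : Continuous (fun x => fderiv ℝ χ x v) :=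
    (hc.continuous_fderiv (by simp)).clm_apply continuous_const
  have hχ's : HasCompactSupport (fun x => fderiv ℝ χ x v) := hs.fderiv_apply ℝ v
  have i1 : Integrable (fun x => e x * fderiv ℝ χ x v) :=
    (hec.mul hχ').integrable_of_hasCompactSupport hχ's.mul_left
  have i2 : Integrable (fun x => e x * χ x) :=
    (hec.mul hc.continuous).integrable_of_hasCompactSupport hs.mul_left
  have i3 : Integrable (fun x => fderiv ℝ e x v * χ x) := by
    have := i2.const_mul (-(2 * Real.pi * Complex.I) * ζ j)
    refine this.congr (Eventually.of_forall fun x => ?_)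
    simp only [hev]; ring
  have := integral_mul_fderiv_eq_neg_fderiv_mul_of_integrable i3 i1 i2
    (fun x _ => (hed x).differentiableAt) (fun x _ => (hc.differentiable (by simp)) x)
  unfold XX
  calc _ = ∫ x, e x * fderiv ℝ χ x v := by simp only [he]; congr 1; ext x; ring
    _ = _ := this
    _ = _ := by
      rw [← integral_const_mul, ← integral_neg]
      congr 1; ext x; rw [hev]; simp only [he]; ring

lemma XX_decay {d : ℕ} (N : ℕ) : ∀ {χ : Ed d → ℂ} (_ : ContDiff ℝ (⊤ : ℕ∞) χ) (_ : HasCompactSupport χ) (ρ : ℝ),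
    ∃ C : ℝ, 0 ≤ C ∧ ∀ (u : Ed d) (z : Fin d → ℂ), ‖z‖ ≤ ρ →
      (1 + ‖u‖) ^ N * ‖XX χ ((fun i => ((u i : ℝ) : ℂ)) - z)‖ ≤ C := by
  induction N with
  | zero =>
    intro χ hc hs ρ
    obtain ⟨C, hC⟩ := XX_bd0 hc.continuous hs ρ
    refine ⟨max C 0, le_max_right _ _, fun u z hz => ?_⟩
    rw [pow_zero, one_mul]
    refine le_max_of_le_left (hC _ fun j => ?_)
    simpa using (Complex.abs_im_le_norm _).trans ((norm_le_pi_norm z j).trans hz)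
  | succ N ih =>
    intro χ hc hs ρ
    obtain ⟨C, hC0, hC⟩ := ih hc hs ρ
    have := fun j : Fin d => ih (χ := fun x => fderiv ℝ χ x (EuclideanSpace.single j 1))
      ((hc.fderiv_right (m := (⊤ : ℕ∞)) (by simp)).clm_apply contDiff_const) (hs.fderiv_apply ℝ _) ρ
    choose D hD0 hD using this
    refine ⟨(1 + d * |ρ|) * C + ∑ j, D j, add_nonneg (by positivity) (Finset.sum_nonneg fun j _ => hD0 j), fun u z hz => ?_⟩
    set ζ : Fin d → ℂ := (fun i => ((u i : ℝ) : ℂ)) - z with hζ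
    have hu : ‖u‖ ≤ ∑ j, |u j| := by
      have : u = ∑ j, EuclideanSpace.single j (u j) := by
        ext i; simp [Finset.sum_apply]
      calc ‖u‖ = ‖∑ j, EuclideanSpace.single j (u j)‖ := by rw [← this]
        _ ≤ ∑ j, ‖EuclideanSpace.single j (u j)‖ := norm_sum_le _ _
        _ = _ := by simp
    have huj : ∀ j, |u j| ≤ ‖ζ j‖ + |ρ| := by
      intro j
      have h1 : ((u j : ℝ) : ℂ) = ζ j + z j := by simp [hζ]
      have h2 : |u j| = ‖((u j : ℝ) : ℂ)‖ := by simp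
      rw [h2, h1]
      exact (norm_add_le _ _).trans (by gcongr; exact ((norm_le_pi_norm z j).trans hz).trans (le_abs_self _))
    have hle : 1 + ‖u‖ ≤ (1 + d * |ρ|) + ∑ j, ‖ζ j‖ := by
      calc 1 + ‖u‖ ≤ 1 + ∑ j, (‖ζ j‖ + |ρ|) := by
            gcongr; exact hu.trans (Finset.sum_le_sum fun j _ => huj j)
        _ = _ := by rw [Finset.sum_add_distrib]; simp; ring
    have hj : ∀ j, ‖ζ j‖ * ‖XX χ ζ‖ ≤ ‖XX (fun x => fderiv ℝ χ x (EuclideanSpace.single j 1)) ζ‖ := by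
      intro j
      rw [XX_parts hc hs, norm_mul, norm_mul]
      have : 1 ≤ ‖(2 * Real.pi * Complex.I : ℂ)‖ := by
        simp [abs_of_pos Real.pi_pos]; linarith [Real.pi_gt_three]
      nlinarith [mul_nonneg (norm_nonneg (ζ j)) (norm_nonneg (XX χ ζ))]
    calc (1 + ‖u‖) ^ (N + 1) * ‖XX χ ζ‖ = (1 + ‖u‖) ^ N * ((1 + ‖u‖) * ‖XX χ ζ‖) := by ring
      _ ≤ (1 + ‖u‖) ^ N * (((1 + d * |ρ|) + ∑ j, ‖ζ j‖) * ‖XX χ ζ‖) := by gcongr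
      _ = (1 + d * |ρ|) * ((1 + ‖u‖) ^ N * ‖XX χ ζ‖) + ∑ j, (1 + ‖u‖) ^ N * (‖ζ j‖ * ‖XX χ ζ‖) := by
        rw [add_mul, Finset.sum_mul, mul_add, Finset.mul_sum]; ring
      _ ≤ (1 + d * |ρ|) * C + ∑ j, D j := by
        refine add_le_add (mul_le_mul_of_nonneg_left (hC u z hz) (by positivity))
          (Finset.sum_le_sum fun j _ => ?_)
        exact (mul_le_mul_of_nonneg_left (hj j) (by positivity)).trans (hD j u z hz)

open scoped SchwartzMap in
lemma cutoff_dense {d : ℕ} (k : 𝓢(Ed d, ℂ)) :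
    ∃ kn : ℕ → 𝓢(Ed d, ℂ), Tendsto kn atTop (𝓝 k) ∧
      (∀ n, HasCompactSupport (kn n)) ∧ ∀ n x, k x = 0 → kn n x = 0 := by
  let θ : ContDiffBump (0 : Ed d) := ⟨1, 2, one_pos, one_lt_two⟩
  have hθ : ContDiff ℝ (⊤ : ℕ∞) (θ : Ed d → ℝ) := θ.contDiff
  have hθs : HasCompactSupport (θ : Ed d → ℝ) := θ.hasCompactSupport
  let c : ℕ → ℝ := fun n => ((n : ℝ) + 1)⁻¹
  have hc0 : ∀ n, 0 < c n := fun n => by positivity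
  have hc1 : ∀ n, c n ≤ 1 := fun n => inv_le_one_of_one_le₀ (by linarith [(Nat.cast_nonneg n : (0:ℝ) ≤ n)])
  let g : ℕ → (Ed d →L[ℝ] Ed d) := fun n => c n • ContinuousLinearMap.id ℝ (Ed d)
  have hgn : ∀ n, ‖g n‖ ≤ 1 := fun n => by
    refine ContinuousLinearMap.opNorm_le_bound _ zero_le_one fun x => ?_
    change ‖c n • x‖ ≤ _
    rw [norm_smul, Real.norm_of_nonneg (hc0 n).le]
    exact mul_le_mul_of_nonneg_right (hc1 n) (norm_nonneg _)
  have hθn : ∀ n, ContDiff ℝ (⊤ : ℕ∞) (θ ∘ g n) := fun n => hθ.comp (g n).contDiff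
  have hθns : ∀ n, HasCompactSupport (θ ∘ g n) := fun n => by
    have : (θ ∘ g n) = fun x => θ (c n • x) := by ext x; simp [g]
    rw [this]
    exact hθs.comp_smul (hc0 n).ne'
  have hT : ∀ n, (θ ∘ g n).HasTemperateGrowth := fun n => (hθns n).hasTemperateGrowth (hθn n)
  refine ⟨fun n => SchwartzMap.smulLeftCLM ℂ (θ ∘ g n) k, ?_, fun n => ?_, fun n x hx => ?_⟩
  rotate_left
  · rw [SchwartzMap.smulLeftCLM_apply (hT n)]
    exact (hθns n).smul_right
  · rw [SchwartzMap.smulLeftCLM_apply_apply (hT n), hx, smul_zero]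
  -- bounds on the derivatives of `θ - 1`
  let η : Ed d → ℝ := fun x => θ x - 1
  have hη : ContDiff ℝ (⊤ : ℕ∞) η := hθ.sub contDiff_const
  have hB : ∀ i : ℕ, ∃ B : ℝ, 0 ≤ B ∧ ∀ x, ‖iteratedFDeriv ℝ i η x‖ ≤ B := by
    intro i
    obtain ⟨C, hC⟩ := (hθs.iteratedFDeriv (𝕜 := ℝ) i).exists_bound_of_continuous
      (hθ.continuous_iteratedFDeriv (m := i) (by exact_mod_cast le_top))
    have h1 : ∀ x, ‖iteratedFDeriv ℝ i (fun _ : Ed d => (1:ℝ)) x‖ ≤ 1 := by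
      intro x
      rcases eq_or_ne i 0 with rfl | hi
      · simp
      · rw [iteratedFDeriv_const_of_ne hi]; simp
    refine ⟨C + 1, ?_, fun x => ?_⟩
    · have := (norm_nonneg _).trans (hC 0); linarith
    · have h2 := iteratedFDeriv_sub_apply (𝕜 := ℝ) (i := i) (f := (θ : Ed d → ℝ)) (g := fun _ => (1:ℝ)) (x := x)
        (hθ.contDiffAt.of_le (by exact_mod_cast le_top)) contDiffAt_const
      have h3 : iteratedFDeriv ℝ i η x = iteratedFDeriv ℝ i ((θ : Ed d → ℝ) - fun _ => (1:ℝ)) x := rfl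
      rw [h3, h2]
      exact (norm_sub_le _ _).trans (add_le_add (hC x) (h1 x))
  choose B hB0 hB using hB
  have hηn : ∀ n, ContDiff ℝ (⊤ : ℕ∞) (η ∘ g n) := fun n => hη.comp (g n).contDiff
  have hD : ∀ n i x, ‖iteratedFDeriv ℝ i (η ∘ g n) x‖ ≤ B i * (‖x‖ * c n) := by
    intro n i x
    by_cases hx : ‖x‖ * c n < 1
    · have hev : (η ∘ g n) =ᶠ[𝓝 x] fun _ => 0 := by
        have : ∀ᶠ y in 𝓝 x, ‖y‖ * c n < 1 :=
          (continuous_norm.mul continuous_const).continuousAt.eventually_lt continuousAt_const hx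
        filter_upwards [this] with y hy
        simp only [Function.comp, η]
        rw [θ.one_of_mem_closedBall, sub_self]
        rw [mem_closedBall_zero_iff]
        change ‖c n • y‖ ≤ 1
        rw [norm_smul, Real.norm_of_nonneg (hc0 n).le]
        linarith
      have := (hev.iteratedFDeriv ℝ i).eq_of_nhds
      rw [this]
      have : iteratedFDeriv ℝ i (fun _ : Ed d => (0:ℝ)) x = 0 := by
        have := iteratedFDeriv_fun_zero (𝕜 := ℝ) (E := Ed d) (F := ℝ) (n := i)
        exact congrFun this x
      rw [this, norm_zero]
      exact mul_nonneg (hB0 i) (mul_nonneg (norm_nonneg _) (hc0 n).le)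
    · push Not at hx
      rw [ContinuousLinearMap.iteratedFDeriv_comp_right (g n) hη x (by exact_mod_cast le_top)]
      calc _ ≤ ‖iteratedFDeriv ℝ i η (g n x)‖ * ∏ _j : Fin i, ‖g n‖ :=
            ContinuousMultilinearMap.norm_compContinuousLinearMap_le _ _
        _ ≤ B i * 1 := by
          refine mul_le_mul (hB i _) ?_ (Finset.prod_nonneg fun _ _ => norm_nonneg _) (hB0 i)
          exact Finset.prod_le_one (fun _ _ => norm_nonneg _) fun _ _ => hgn n
        _ ≤ _ := mul_le_mul_of_nonneg_left hx (hB0 i)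
  rw [(schwartz_withSeminorms ℝ (Ed d) ℂ).tendsto_nhds _ k]
  rintro ⟨m, N⟩ ε hε
  set M : ℝ := ∑ i ∈ Finset.range (N + 1), (N.choose i : ℝ) * B i * SchwartzMap.seminorm ℝ (m + 1) (N - i) k with hM
  have hM0 : 0 ≤ M := Finset.sum_nonneg fun i _ => mul_nonneg (mul_nonneg (by positivity) (hB0 i)) (apply_nonneg _ _)
  have hcl : Tendsto (fun n => c n * M) atTop (𝓝 0) := by
    have := (tendsto_one_div_add_atTop_nhds_zero_nat (𝕜 := ℝ)).mul_const M
    simpa [c] using this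
  filter_upwards [hcl.eventually_lt_const hε] with n hn
  refine lt_of_le_of_lt ?_ hn
  refine SchwartzMap.seminorm_le_bound ℝ m N _ (mul_nonneg (hc0 n).le hM0) fun x => ?_
  have hfun : (⇑(SchwartzMap.smulLeftCLM ℂ (θ ∘ g n) k - k) : Ed d → ℂ) = fun x => (η ∘ g n) x • k x := by
    ext x
    have : (SchwartzMap.smulLeftCLM ℂ (θ ∘ g n) k - k) x = SchwartzMap.smulLeftCLM ℂ (θ ∘ g n) k x - k x := by
      simp
    rw [this, SchwartzMap.smulLeftCLM_apply_apply (hT n)]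
    simp only [η, Function.comp, sub_smul, one_smul]
  rw [hfun]
  have h1 := norm_iteratedFDeriv_smul_le (𝕜 := ℝ) (hηn n) (k.smooth ⊤) x (n := N) (by exact_mod_cast le_top)
  calc _ ≤ ‖x‖ ^ m * ∑ i ∈ Finset.range (N + 1),
      (N.choose i : ℝ) * ‖iteratedFDeriv ℝ i (η ∘ g n) x‖ * ‖iteratedFDeriv ℝ (N - i) k x‖ :=
        mul_le_mul_of_nonneg_left h1 (by positivity)
    _ ≤ c n * M := by
      rw [hM, Finset.mul_sum, Finset.mul_sum]
      refine Finset.sum_le_sum fun i _ => ?_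
      have h2 := SchwartzMap.le_seminorm ℝ (m + 1) (N - i) k x
      calc _ ≤ ‖x‖ ^ m * ((N.choose i : ℝ) * (B i * (‖x‖ * c n)) * ‖iteratedFDeriv ℝ (N - i) k x‖) := by
            gcongr; exact hD n i x
        _ = c n * ((N.choose i : ℝ) * B i * (‖x‖ ^ (m + 1) * ‖iteratedFDeriv ℝ (N - i) k x‖)) := by ring
        _ ≤ _ := mul_le_mul_of_nonneg_left (mul_le_mul_of_nonneg_left h2 (mul_nonneg (by positivity) (hB0 i))) (hc0 n).le

/-- real vector as a complex vector -/
def cx {d : ℕ} (u : Ed d) : Fin d → ℂ := fun i => ((u i : ℝ) : ℂ)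

lemma cont_cx {d : ℕ} : Continuous (cx (d := d)) := by unfold cx; fun_prop

lemma pr_cx {d : ℕ} (u x : Ed d) : pr (cx u) x = ((⟪x, u⟫ : ℝ) : ℂ) := by
  simp [pr, cx, PiLp.inner_apply]

lemma pr_sub {d : ℕ} (a b : Fin d → ℂ) (x : Ed d) : pr (a - b) x = pr a x - pr b x := by
  simp [pr, sub_mul, Finset.sum_sub_distrib]

open scoped SchwartzMap FourierTransform in
lemma four_mul {d : ℕ} {χ : Ed d → ℂ} (hc : Continuous χ) (hs : HasCompactSupport χ)
    (g : 𝓢(Ed d, ℂ)) (u : Ed d) :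
    𝓕 (fun x => χ x * (𝓕⁻ (g : Ed d → ℂ)) x) u = ∫ v, g v * XX χ (cx u - cx v) := by
  let K : Ed d → Ed d → ℂ := fun x v =>
    Complex.exp (((-2 * Real.pi * ⟪x, u⟫ : ℝ) : ℂ) * Complex.I) * χ x *
      (Complex.exp (((2 * Real.pi * ⟪v, x⟫ : ℝ) : ℂ) * Complex.I) * g v)
  have hi : Integrable (Function.uncurry K) (volume.prod volume) := by
    have h1 : Integrable (fun p : Ed d × Ed d => χ p.1 * g p.2) (volume.prod volume) :=
      (hc.integrable_of_hasCompactSupport hs).mul_prod g.integrable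
    refine h1.mono ?_ (Eventually.of_forall fun p => ?_)
    · have hg := g.continuous
      apply Continuous.aestronglyMeasurable
      unfold K Function.uncurry
      fun_prop
    · simp only [K, Function.uncurry, norm_mul, Complex.norm_exp_ofReal_mul_I, one_mul]
      exact le_rfl
  calc _ = ∫ x, ∫ v, K x v := by
        rw [Real.fourier_eq']
        congr 1; ext x
        rw [Real.fourierInv_eq', smul_eq_mul, ← mul_assoc, ← integral_const_mul]
        rfl
    _ = ∫ v, ∫ x, K x v := integral_integral_swap hi
    _ = _ := by
        congr 1; ext v
        unfold XX
        rw [← integral_const_mul]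
        congr 1; ext x
        have : Complex.exp (-(2 * Real.pi * Complex.I) * pr (cx u - cx v) x) =
            Complex.exp (((-2 * Real.pi * ⟪x, u⟫ : ℝ) : ℂ) * Complex.I) *
            Complex.exp (((2 * Real.pi * ⟪v, x⟫ : ℝ) : ℂ) * Complex.I) := by
          rw [← Complex.exp_add, pr_sub, pr_cx, pr_cx, real_inner_comm v x]
          congr 1
          push_cast
          ring
        rw [this]
        simp only [K]
        ring

/-- The entire density. -/
def PsiF {d : ℕ} (S : Measure (Ed d)) (w χ : Ed d → ℂ) (z : Fin d → ℂ) : ℂ :=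
  ∫ u, w u * XX χ (cx u - z) ∂S

lemma Psi_bd {d : ℕ} {w χ : Ed d → ℂ} {N : ℕ} {u : Ed d} {z : Fin d → ℂ} {C : ℝ}
    (h : (1 + ‖u‖) ^ N * ‖XX χ (cx u - z)‖ ≤ C) :
    ‖w u * XX χ (cx u - z)‖ ≤ C * (‖w u‖ * ((1 + ‖u‖) ^ N)⁻¹) := by
  have hp : (0:ℝ) < (1 + ‖u‖) ^ N := by positivity
  rw [norm_mul]
  have : ‖XX χ (cx u - z)‖ ≤ C * ((1 + ‖u‖) ^ N)⁻¹ := by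
    rw [← div_eq_mul_inv, le_div_iff₀ hp]; linarith
  calc _ ≤ ‖w u‖ * (C * ((1 + ‖u‖) ^ N)⁻¹) := by gcongr
    _ = _ := by ring

lemma Psi_diff {d : ℕ} (S : Measure (Ed d)) {w χ : Ed d → ℂ} (hw : AEStronglyMeasurable w S) {N : ℕ}
    (hwi : Integrable (fun u => ‖w u‖ * ((1 + ‖u‖) ^ N)⁻¹) S)
    (hc : ContDiff ℝ (⊤ : ℕ∞) χ) (hs : HasCompactSupport χ) : Differentiable ℂ (PsiF S w χ) := by
  have hX := XX_diff hc.continuous hs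
  refine hol_int S w hw (fun u z => XX χ (cx u - z)) ?_ ?_ ?_
  · exact hX.continuous.comp ((cont_cx.comp continuous_fst).sub continuous_snd)
  · intro u
    exact hX.comp ((differentiable_const _).sub differentiable_id)
  · intro ρ
    obtain ⟨C, hC0, hC⟩ := XX_decay N hc hs ρ
    exact ⟨_, hwi.const_mul C, fun u z hz => Psi_bd (hC u z hz)⟩

open scoped SchwartzMap FourierTransform in
lemma Psi_pair {d : ℕ} (S : Measure (Ed d)) [SFinite S] {w χ : Ed d → ℂ}
    (hw : AEStronglyMeasurable w S) {N : ℕ}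
    (hwi : Integrable (fun u => ‖w u‖ * ((1 + ‖u‖) ^ N)⁻¹) S)
    (hc : ContDiff ℝ (⊤ : ℕ∞) χ) (hs : HasCompactSupport χ)
    (g : 𝓢(Ed d, ℂ)) (hg : HasCompactSupport g) :
    ∫ u, w u * 𝓕 (fun x => χ x * (𝓕⁻ (g : Ed d → ℂ)) x) u ∂S = ∫ v, g v * PsiF S w χ (cx v) := by
  have hX := XX_diff hc.continuous hs
  obtain ⟨R, hR0, hR⟩ := cs_bd hg
  obtain ⟨C, hC0, hC⟩ := XX_decay N hc hs R
  have hi : Integrable (Function.uncurry fun u v : Ed d => w u * (g v * XX χ (cx u - cx v)))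
      (S.prod volume) := by
    have h1 : Integrable (fun p : Ed d × Ed d => (C * (‖w p.1‖ * ((1 + ‖p.1‖) ^ N)⁻¹)) * ‖g p.2‖)
      (S.prod volume) := (hwi.const_mul C).mul_prod g.integrable.norm
    refine h1.mono' ?_ (Eventually.of_forall fun p => ?_)
    · have hw1 : AEStronglyMeasurable (fun p : Ed d × Ed d => w p.1) (S.prod volume) := hw.comp_fst
      refine hw1.mul (Continuous.aestronglyMeasurable ?_)
      exact (g.continuous.comp continuous_snd).mul
        (hX.continuous.comp ((cont_cx.comp continuous_fst).sub (cont_cx.comp continuous_snd)))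
    · obtain ⟨u, v⟩ := p
      simp only [Function.uncurry]
      by_cases hv : g v = 0
      · simp [hv]
      have hcv : ‖cx v‖ ≤ R := by
        rw [pi_norm_le_iff_of_nonneg hR0]
        intro i
        simp only [cx, Complex.norm_real]
        exact (PiLp.norm_apply_le v i).trans (hR v hv)
      have := Psi_bd (w := w) (hC u (cx v) hcv)
      calc _ = ‖w u * XX χ (cx u - cx v)‖ * ‖g v‖ := by simp only [norm_mul]; ring
        _ ≤ _ := mul_le_mul_of_nonneg_right this (norm_nonneg _)
  calc _ = ∫ u, (∫ v, w u * (g v * XX χ (cx u - cx v))) ∂S := by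
        congr 1; ext u; rw [four_mul hc.continuous hs, integral_const_mul]
    _ = ∫ v, (∫ u, w u * (g v * XX χ (cx u - cx v)) ∂S) := integral_integral_swap hi
    _ = _ := by
        congr 1; ext v
        unfold PsiF
        rw [← integral_const_mul]
        congr 1; ext u; ring

lemma meas_part {d : ℕ} (S : Measure (Ed d)) [IsLocallyFiniteMeasure S] {w ψ : Ed d → ℂ}
    (hw : StronglyMeasurable w) (hwl : LocallyIntegrable w S) (hψ : Continuous ψ)
    (h : ∀ g : Ed d → ℝ, ContDiff ℝ (⊤ : ℕ∞) g → HasCompactSupport g →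
      ∫ u, g u • w u ∂S = ∫ v, g v • ψ v) :
    (∀ᵐ u ∂(S.singularPart volume), w u = 0) ∧
      ∀ᵐ v, (S.rnDeriv volume v).toReal • w v = ψ v := by
  set s := S.rnDeriv volume with hsdef
  have hsm : Measurable s := Measure.measurable_rnDeriv _ _
  have hsf : ∀ᵐ v, s v < ⊤ := Measure.rnDeriv_lt_top _ _
  have hdec : S = S.singularPart volume + volume.withDensity s :=
    Measure.haveLebesgueDecomposition_add S volume
  set S₁ := S.singularPart volume with hS₁
  have h1le : S₁ ≤ S := Measure.singularPart_le _ _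
  have h2le : volume.withDensity s ≤ S := Measure.withDensity_rnDeriv_le _ _
  obtain ⟨N, hNm, hN1, hN2⟩ := Measure.mutuallySingular_singularPart S volume
  have hae1 : ∀ᵐ u ∂S₁, u ∉ N := measure_eq_zero_iff_ae_notMem.1 hN1
  have hae2 : ∀ᵐ u : Ed d, u ∈ N := by
    have := measure_eq_zero_iff_ae_notMem.1 hN2
    filter_upwards [this] with u hu
    simpa using hu
  classical
  let F : Ed d → ℂ := fun u => if u ∈ N then (s u).toReal • w u - ψ u else w u
  have hF1 : F =ᵐ[S₁] w := by
    filter_upwards [hae1] with u hu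
    simp [F, hu]
  have hF2 : F =ᵐ[volume] fun u => (s u).toReal • w u - ψ u := by
    filter_upwards [hae2] with u hu
    simp [F, hu]
  have hwK : ∀ K, IsCompact K → IntegrableOn w K S := fun K hK => hwl.integrableOn_isCompact hK
  have hswK : ∀ K, IsCompact K → IntegrableOn (fun u => (s u).toReal • w u) K := by
    intro K hK
    have h2 : IntegrableOn w K (volume.withDensity s) := (hwK K hK).mono_measure h2le
    unfold IntegrableOn at h2 ⊢
    rw [restrict_withDensity hK.measurableSet] at h2
    exact (integrable_withDensity_iff_integrable_smul' hsm (ae_restrict_of_ae hsf)).1 h2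
  have hFl : LocallyIntegrable F (S₁ + volume) := by
    rw [locallyIntegrable_iff]
    intro K hK
    rw [IntegrableOn, Measure.restrict_add, integrable_add_measure]
    constructor
    · exact ((hwK K hK).mono_measure h1le).congr (ae_restrict_of_ae hF1.symm)
    · refine Integrable.congr ?_ (ae_restrict_of_ae hF2.symm)
      exact (hswK K hK).sub (hψ.continuousOn.integrableOn_compact hK)
  have key : ∀ᵐ u ∂(S₁ + volume), F u = 0 := by
    refine ae_eq_zero_of_integral_contDiff_smul_eq_zero hFl fun g hg hgs => ?_
    have hgc := hg.continuous
    have i1 : Integrable (fun u => g u • w u) S := by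
      simpa using hwl.integrable_smul_left_of_hasCompactSupport hgc hgs
    have i3 : Integrable (fun u => g u • ψ u) :=
      (hgc.smul hψ).integrable_of_hasCompactSupport hgs.smul_right
    have i2 : Integrable (fun u => g u • ((s u).toReal • w u)) := by
      have := (integrable_withDensity_iff_integrable_smul' hsm hsf).1 (i1.mono_measure h2le)
      refine this.congr (Eventually.of_forall fun u => ?_)
      simp only [smul_smul, mul_comm]
    have j1 : Integrable (fun u => g u • F u) S₁ :=
      (i1.mono_measure h1le).congr (by filter_upwards [hF1] with u hu; rw [hu])
    have hcong : (fun u => g u • F u) =ᵐ[volume] fun u => g u • ((s u).toReal • w u) - g u • ψ u := by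
      filter_upwards [hF2] with u hu; rw [hu, smul_sub]
    have j2 : Integrable (fun u => g u • F u) := (i2.sub i3).congr hcong.symm
    rw [integral_add_measure j1 j2, integral_congr_ae hcong, integral_sub i2 i3]
    have e1 : ∫ u, g u • F u ∂S₁ = ∫ u, g u • w u ∂S₁ :=
      integral_congr_ae (by filter_upwards [hF1] with u hu; rw [hu])
    have e2 : ∫ u, g u • ((s u).toReal • w u) = ∫ u, g u • w u ∂(volume.withDensity s) := by
      rw [integral_withDensity_eq_integral_toReal_smul hsm hsf]
      congr 1; ext u; simp only [smul_smul, mul_comm]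
    have e3 := h g hg hgs
    rw [hdec, integral_add_measure (i1.mono_measure h1le) (i1.mono_measure h2le)] at e3
    rw [e1, e2, ← e3]
    ring
  rw [ae_add_measure_iff] at key
  refine ⟨?_, ?_⟩
  · filter_upwards [key.1, hF1] with u h1 h2
    rw [← h2, h1]
  · filter_upwards [key.2, hF2] with u h1 h2
    rw [h2] at h1
    exact sub_eq_zero.1 h1

lemma hint_int {d : ℕ} (S : Measure (Ed d))
    (hint : (∫⁻ u, ENNReal.ofReal (((1 + ‖u‖) ^ (d + 1))⁻¹) ∂S) < ⊤) :
    Integrable (fun u : Ed d => ((1 + ‖u‖) ^ (d + 1))⁻¹) S := by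
  refine ⟨?_, ?_⟩
  · apply Measurable.aestronglyMeasurable; fun_prop
  · rw [hasFiniteIntegral_iff_ofReal (Eventually.of_forall fun u => by positivity)]
    exact hint

lemma S_tg {d : ℕ} (S : Measure (Ed d))
    (h : Integrable (fun u : Ed d => ((1 + ‖u‖) ^ (d + 1))⁻¹) S) : S.HasTemperateGrowth := by
  refine ⟨⟨d + 1, h.congr (Eventually.of_forall fun u => ?_)⟩⟩
  simp only
  rw [Real.rpow_neg (by positivity), Real.rpow_natCast]

lemma S_lf {d : ℕ} (S : Measure (Ed d))
    (h : Integrable (fun u : Ed d => ((1 + ‖u‖) ^ (d + 1))⁻¹) S) : IsLocallyFiniteMeasure S := by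
  refine ⟨fun x => ⟨Metric.ball x 1, Metric.ball_mem_nhds x one_pos, ?_⟩⟩
  have hp : (0:ℝ) < ((1 + (‖x‖ + 1)) ^ (d + 1))⁻¹ := by positivity
  refine (measure_mono ?_).trans_lt (h.measure_ge_lt_top hp)
  intro u hu
  have : ‖u‖ ≤ ‖x‖ + 1 := by
    have h1 : ‖u - x‖ < 1 := by simpa [dist_eq_norm] using hu
    have h2 : ‖u‖ ≤ ‖x‖ + ‖u - x‖ := by
      calc ‖u‖ = ‖x + (u - x)‖ := by congr 1; abel
        _ ≤ _ := norm_add_le _ _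
    linarith
  simp only [Set.mem_ofPred_eq]
  gcongr

lemma w_int {d : ℕ} (S : Measure (Ed d)) {w : Ed d → ℂ} (hw : MemLp w 2 S)
    (h : Integrable (fun u : Ed d => ((1 + ‖u‖) ^ (d + 1))⁻¹) S) :
    Integrable (fun u => ‖w u‖ * ((1 + ‖u‖) ^ (d + 1))⁻¹) S := by
  have h2 : Integrable (fun u => ‖w u‖ ^ 2) S := by
    simpa using hw.integrable_norm_pow (by norm_num)
  refine (h2.add h).mono' ?_ (Eventually.of_forall fun u => ?_)
  · refine hw.1.norm.mul (Measurable.aestronglyMeasurable ?_); fun_prop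
  · have hp : (0:ℝ) ≤ ((1 + ‖u‖) ^ (d + 1))⁻¹ := by positivity
    have hp1 : ((1 + ‖u‖) ^ (d + 1))⁻¹ ≤ 1 :=
      inv_le_one_of_one_le₀ (one_le_pow₀ (by linarith [norm_nonneg u]))
    simp only [Pi.add_apply]
    rw [Real.norm_of_nonneg (by positivity)]
    have : 0 ≤ ‖w u‖ := norm_nonneg _
    generalize ((1 + ‖u‖) ^ (d + 1))⁻¹ = b at *
    generalize ‖w u‖ = a at *
    nlinarith [sq_nonneg (a - b), sq_nonneg a]

lemma w_lint {d : ℕ} (S : Measure (Ed d)) {w : Ed d → ℂ} (hw : MemLp w 2 S) :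
    (∫⁻ u, (‖w u‖₊ : ℝ≥0∞) ^ 2 ∂S) < ⊤ := by
  have h2 : Integrable (fun u => ‖w u‖ ^ 2) S := by
    simpa using hw.integrable_norm_pow (by norm_num)
  have := h2.2
  rw [hasFiniteIntegral_iff_enorm] at this
  refine lt_of_le_of_lt (le_of_eq ?_) this
  congr 1; ext u
  rw [enorm_pow, enorm_norm, enorm_eq_nnnorm]

open scoped SchwartzMap FourierTransform in
lemma core {d : ℕ} (S : Measure (Ed d)) [S.HasTemperateGrowth]
    (hint : Integrable (fun u : Ed d => ((1 + ‖u‖) ^ (d + 1))⁻¹) S)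
    (hdet : ∀ ψ : Ed d → ℂ,
      (∃ Ψ : (Fin d → ℂ) → ℂ, Differentiable ℂ Ψ ∧
        ∀ u : Ed d, Ψ (fun i => ((u i : ℝ) : ℂ)) = ψ u) →
      (∫⁻ u, (‖ψ u‖₊ : ℝ≥0∞) ^ 2 / ENNReal.ofReal ((S.rnDeriv volume u).toReal) ∂volume) < ⊤ →
      ∀ u, ψ u = 0) (r : ℝ) (hr : 0 < r) (φ : Lp ℂ 2 S)
    (H : ∀ k : 𝓢(Ed d, ℂ), HasCompactSupport k → (∀ x, ‖x‖ < r → k x = 0) →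
      inner ℂ φ (SchwartzMap.toLpCLM ℂ ℂ 2 S (SchwartzMap.fourierTransformCLM ℂ k)) = 0) :
    φ = 0 := by
  have : IsLocallyFiniteMeasure S := S_lf S hint
  have H2 : ∀ k : 𝓢(Ed d, ℂ), (∀ x, ‖x‖ < r → k x = 0) →
      inner ℂ φ (SchwartzMap.toLpCLM ℂ ℂ 2 S (SchwartzMap.fourierTransformCLM ℂ k)) = 0 := by
    intro k hk
    obtain ⟨kn, h1, h2, h3⟩ := cutoff_dense k
    have hc : Continuous fun k : 𝓢(Ed d, ℂ) =>
      inner ℂ φ (SchwartzMap.toLpCLM ℂ ℂ 2 S (SchwartzMap.fourierTransformCLM ℂ k)) := by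
      fun_prop
    have ht := (hc.tendsto k).comp h1
    refine tendsto_nhds_unique ht ?_
    refine tendsto_const_nhds.congr fun n => ?_
    exact (H _ (h2 n) fun x hx => h3 n x (hk x hx)).symm
  let w : Ed d → ℂ := fun u => (starRingEnd ℂ) (φ u)
  have hwm : StronglyMeasurable w :=
    Complex.continuous_conj.comp_stronglyMeasurable (Lp.stronglyMeasurable φ)
  have hw2 : MemLp w 2 S := (Lp.memLp φ).of_le hwm.aestronglyMeasurable
    (Eventually.of_forall fun u => by simp [w])
  have H3 : ∀ k : 𝓢(Ed d, ℂ), (∀ x, ‖x‖ < r → k x = 0) →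
      ∫ u, w u * 𝓕 (k : Ed d → ℂ) u ∂S = 0 := by
    intro k hk
    rw [← H2 k hk, L2.inner_def]
    refine integral_congr_ae ?_
    filter_upwards [SchwartzMap.coeFn_toLp (SchwartzMap.fourierTransformCLM ℂ k) 2 S] with u hu
    rw [SchwartzMap.toLpCLM_apply, hu]
    simp only [RCLike.inner_apply, w, SchwartzMap.fourierTransformCLM_apply, SchwartzMap.fourier_coe]
    ring
  have hwi := w_int S hw2 hint
  have hwl : LocallyIntegrable w S := hw2.locallyIntegrable (by norm_num)
  let b : ContDiffBump (0 : Ed d) := ⟨r, r + 1, hr, by linarith⟩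
  let χ : Ed d → ℂ := fun x => ((b x : ℝ) : ℂ)
  have hχc : ContDiff ℝ (⊤ : ℕ∞) χ := Complex.ofRealCLM.contDiff.comp b.contDiff
  have hχs : HasCompactSupport χ := b.hasCompactSupport.comp_left (g := fun x : ℝ => (x : ℂ)) (by simp)
  have hχ1 : ∀ x, ‖x‖ < r → χ x = 1 := by
    intro x hx
    have : b x = 1 := b.one_of_mem_closedBall (by simpa [b] using hx.le)
    simp [χ, this]
  have hdiff := Psi_diff S hwm.aestronglyMeasurable hwi hχc hχs
  have hχt : χ.HasTemperateGrowth := hχs.hasTemperateGrowth hχc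
  obtain ⟨hm1, hm2⟩ := meas_part S (ψ := fun v => PsiF S w χ (cx v)) hwm hwl
    (hdiff.continuous.comp cont_cx) (by
      intro g hg hgs
      let gc : Ed d → ℂ := fun x => ((g x : ℝ) : ℂ)
      have hgc : ContDiff ℝ (⊤ : ℕ∞) gc := Complex.ofRealCLM.contDiff.comp hg
      have hgcs : HasCompactSupport gc := hgs.comp_left (g := fun x : ℝ => (x : ℂ)) (by simp)
      let G : 𝓢(Ed d, ℂ) := hgcs.toSchwartzMap hgc
      have hG : ∀ x, G x = (g x : ℂ) := fun x => rfl
      have hGs : HasCompactSupport G := hgcs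
      have hp := Psi_pair S hwm.aestronglyMeasurable hwi hχc hχs G hGs
      let k1 : 𝓢(Ed d, ℂ) := SchwartzMap.smulLeftCLM ℂ χ (𝓕⁻ G)
      have hk1 : ∀ x, k1 x = χ x * (𝓕⁻ (G : Ed d → ℂ)) x := by
        intro x
        simp only [k1]
        rw [SchwartzMap.smulLeftCLM_apply_apply hχt, smul_eq_mul, SchwartzMap.fourierInv_coe]
      have hk1' : (k1 : Ed d → ℂ) = fun x => χ x * (𝓕⁻ (G : Ed d → ℂ)) x := funext hk1
      have h0 := H3 (𝓕⁻ G - k1) (by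
        intro x hx
        rw [sub_apply, hk1, hχ1 x hx, one_mul, SchwartzMap.fourierInv_coe, sub_self])
      have hF : ∀ u, 𝓕 ((𝓕⁻ G - k1 : 𝓢(Ed d, ℂ)) : Ed d → ℂ) u = G u - 𝓕 (k1 : Ed d → ℂ) u := by
        intro u
        have hsub : 𝓕 (𝓕⁻ G - k1) = G - 𝓕 k1 := by
          have := map_sub (SchwartzMap.fourierTransformCLM ℂ) (𝓕⁻ G) k1
          simpa only [SchwartzMap.fourierTransformCLM_apply,
            FourierTransform.fourier_fourierInv_eq] using this
        rw [← SchwartzMap.fourier_coe, ← SchwartzMap.fourier_coe, hsub, sub_apply]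
      simp only [hF, mul_sub] at h0
      have int1 : ∀ q : 𝓢(Ed d, ℂ), Integrable (fun u => w u * q u) S := fun q =>
        hw2.integrable_mul (q.memLp 2 S)
      rw [integral_sub (int1 G) (by simpa [SchwartzMap.fourier_coe] using int1 (𝓕 k1)), hk1', hp,
        sub_eq_zero] at h0
      simp only [hG] at h0
      simp only [Complex.real_smul]
      rw [← h0]
      congr 1; ext u; ring)
  set s := S.rnDeriv volume with hsdef
  have hsm : Measurable s := Measure.measurable_rnDeriv _ _
  have hsf : ∀ᵐ v, s v < ⊤ := Measure.rnDeriv_lt_top _ _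
  have hψ0 := hdet (fun v => PsiF S w χ (cx v)) ⟨PsiF S w χ, hdiff, fun u => rfl⟩ (by
    calc _ ≤ ∫⁻ u, s u * (‖w u‖₊ : ℝ≥0∞) ^ 2 := by
          refine lintegral_mono_ae ?_
          filter_upwards [hm2, hsf] with u hu hu2
          rw [← hu, ENNReal.ofReal_toReal hu2.ne]
          rw [nnnorm_smul, ENNReal.coe_mul, mul_pow]
          have : ((‖(s u).toReal‖₊ : ℝ≥0) : ℝ≥0∞) = s u := by
            rw [← enorm_eq_nnnorm, Real.enorm_of_nonneg ENNReal.toReal_nonneg,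
              ENNReal.ofReal_toReal hu2.ne]
          rw [this]
          by_cases h0 : s u = 0
          · simp [h0]
          · refine le_of_eq ?_
            rw [div_eq_mul_inv, mul_right_comm, sq, mul_assoc (s u), ENNReal.mul_inv_cancel h0 hu2.ne,
              mul_one]
      _ = ∫⁻ u, (‖w u‖₊ : ℝ≥0∞) ^ 2 ∂(volume.withDensity s) := by
          rw [lintegral_withDensity_eq_lintegral_mul _ hsm]
          · rfl
          · have := hwm.measurable; fun_prop
      _ ≤ ∫⁻ u, (‖w u‖₊ : ℝ≥0∞) ^ 2 ∂S :=
          lintegral_mono' (Measure.withDensity_rnDeriv_le _ _) le_rfl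
      _ < ⊤ := w_lint S hw2)
  have hdec : S = S.singularPart volume + volume.withDensity s :=
    Measure.haveLebesgueDecomposition_add S volume
  have hw0 : ∀ᵐ u ∂S, w u = 0 := by
    rw [hdec, ae_add_measure_iff]
    refine ⟨hm1, ?_⟩
    rw [ae_withDensity_iff hsm]
    filter_upwards [hm2, hsf] with u hu hu2 h0
    rw [hψ0 u, smul_eq_zero, ENNReal.toReal_eq_zero_iff] at hu
    rcases hu with (h | h) | h
    · exact absurd h h0
    · exact absurd h hu2.ne
    · exact h
  rw [Lp.eq_zero_iff_ae_eq_zero]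
  filter_upwards [hw0] with u hu
  simpa [w] using hu

open scoped SchwartzMap FourierTransform in
lemma FT_scale {d : ℕ} (k : Ed d → ℂ) (u : Ed d) :
    FT (fun x => ((((2 * Real.pi)⁻¹ ^ d : ℝ)) : ℂ) * k ((2 * Real.pi)⁻¹ • x)) u = 𝓕 k u := by
  have hpi : (2 * Real.pi : ℝ) ≠ 0 := by positivity
  let F : Ed d → ℂ := fun y =>
    Complex.exp (((-2 * Real.pi * ⟪y, u⟫ : ℝ) : ℂ) * Complex.I) • k y
  have h := Measure.integral_comp_smul_of_nonneg (volume : Measure (Ed d)) F (2 * Real.pi)⁻¹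
    (hR := by positivity)
  have hfin : Module.finrank ℝ (Ed d) = d := by simp
  rw [hfin] at h
  calc FT (fun x => ((((2 * Real.pi)⁻¹ ^ d : ℝ)) : ℂ) * k ((2 * Real.pi)⁻¹ • x)) u
      = ∫ x, ((((2 * Real.pi)⁻¹ ^ d : ℝ)) : ℂ) * F ((2 * Real.pi)⁻¹ • x) := by
        unfold FT
        congr 1; ext x
        have : Complex.exp (-Complex.I * (⟪u, x⟫ : ℝ)) = Complex.exp
          (((-2 * Real.pi * ⟪(2 * Real.pi)⁻¹ • x, u⟫ : ℝ) : ℂ) * Complex.I) := by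
          congr 1
          rw [real_inner_smul_left, real_inner_comm]
          have : -2 * Real.pi * ((2 * Real.pi)⁻¹ * ⟪u, x⟫) = -⟪u, x⟫ := by field_simp
          rw [real_inner_comm x u] at this
          rw [this]
          push_cast; ring
        simp only [F]
        rw [this, smul_eq_mul]
        ring
    _ = 𝓕 k u := by
        rw [integral_const_mul, h, Real.fourier_eq', Complex.real_smul, ← mul_assoc,
          ← Complex.ofReal_mul, mul_inv_cancel₀ (by positivity), Complex.ofReal_one, one_mul]

lemma IsCBS.integrable' {d : ℕ} {A : Set (Ed d)} {f : Ed d → ℂ} (hf : IsCBS A f) :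
    Integrable f := by
  obtain ⟨hm, ⟨C, hC⟩, hb, -⟩ := hf
  obtain ⟨R, hR⟩ := hb.subset_closedBall (0 : Ed d)
  rw [← integrableOn_iff_integrable_of_support_subset hR]
  exact Measure.integrableOn_of_bounded (M := C) measure_closedBall_lt_top.ne
    hm.aestronglyMeasurable (Eventually.of_forall hC)

lemma FT_cont {d : ℕ} {f : Ed d → ℂ} (hf : Integrable f) : Continuous (FT f) := by
  unfold FT
  refine continuous_of_dominated (bound := fun x => ‖f x‖) ?_ ?_ hf.norm ?_
  · intro u
    refine AEStronglyMeasurable.mul (Continuous.aestronglyMeasurable ?_) hf.1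
    fun_prop
  · intro u
    refine Eventually.of_forall fun x => ?_
    rw [norm_mul]
    have : -Complex.I * ((⟪u, x⟫ : ℝ) : ℂ) = ((-⟪u, x⟫ : ℝ) : ℂ) * Complex.I := by push_cast; ring
    rw [this, Complex.norm_exp_ofReal_mul_I, one_mul]
  · refine Eventually.of_forall fun x => ?_
    fun_prop

open scoped SchwartzMap in
/-- admissible Schwartz functions -/
def PP (d : ℕ) (r : ℝ) : Submodule ℂ 𝓢(Ed d, ℂ) where
  carrier := {k | HasCompactSupport (k : Ed d → ℂ) ∧ ∀ x, ‖x‖ < r → k x = 0}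
  add_mem' := by
    rintro a b ⟨h1, h2⟩ ⟨h3, h4⟩
    exact ⟨h1.add h3, fun x hx => by
      rw [add_apply, h2 x hx, h4 x hx, add_zero]⟩
  zero_mem' := ⟨HasCompactSupport.zero, fun x hx => rfl⟩
  smul_mem' := by
    rintro c a ⟨h1, h2⟩
    exact ⟨h1.smul_left (f := fun _ => c), fun x hx => by
      rw [smul_apply, h2 x hx, smul_zero]⟩

open scoped SchwartzMap FourierTransform

/-- Corollary 2: if the spectral density `s` (the Radon–Nikodym derivative of `S` w.r.t.
Lebesgue measure) is *determining* — the only function extending to an entire function on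
`ℂ^d` with `∫ |ψ|²/s < ∞` (integrand `+∞` where `s = 0` and `ψ ≠ 0`) is `0` — then `S`
induces linear maximal rigidity on every bounded Borel set. -/
theorem determining_density_rigid_on_bounded {d : ℕ}
    (S : Measure (Ed d))
    (hsymm : Measure.map (fun u : Ed d => -u) S = S)
    (hint : (∫⁻ u, ENNReal.ofReal (((1 + ‖u‖) ^ (d + 1))⁻¹) ∂S) < ⊤)
    (hdet : ∀ ψ : Ed d → ℂ,
      (∃ Ψ : (Fin d → ℂ) → ℂ, Differentiable ℂ Ψ ∧
        ∀ u : Ed d, Ψ (fun i => ((u i : ℝ) : ℂ)) = ψ u) →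
      (∫⁻ u, (‖ψ u‖₊ : ℝ≥0∞) ^ 2 / ENNReal.ofReal ((S.rnDeriv volume u).toReal) ∂volume) < ⊤ →
      ∀ u, ψ u = 0)
    (A : Set (Ed d)) (hA_meas : MeasurableSet A) (hA_bdd : Bornology.IsBounded A) :
    LMR S A := by
  have hI := hint_int S hint
  have : S.HasTemperateGrowth := S_tg S hI
  have hpi : (0:ℝ) < 2 * Real.pi := by positivity
  obtain ⟨R, hR0, hR⟩ := hA_bdd.subset_ball_lt 0 (0 : Ed d)
  set r : ℝ := (2 * Real.pi)⁻¹ * R with hr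
  have hr0 : 0 < r := by positivity
  intro f hf ε hε
  have hfc := FT_cont hf.integrable'
  have hzero : ∀ u : Ed d, FT (fun _ : Ed d => (0 : ℂ)) u = 0 := fun u => by simp [FT]
  by_cases hfi : Integrable (fun u => ‖FT f u‖ ^ 2) S
  swap
  · refine ⟨fun _ => 0, ⟨measurable_const, ⟨0, by simp⟩, by simp [Function.support], by
      simp [Function.support]⟩, ?_⟩
    simp only [hzero, sub_zero]
    rw [integral_undef hfi]
    exact hε
  have hf2 : MemLp (FT f) 2 S :=
    (memLp_two_iff_integrable_sq_norm hfc.aestronglyMeasurable).2 hfi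
  let T : 𝓢(Ed d, ℂ) →L[ℂ] Lp ℂ 2 S :=
    (SchwartzMap.toLpCLM ℂ ℂ 2 S).comp (SchwartzMap.fourierTransformCLM ℂ)
  let K : Submodule ℂ (Lp ℂ 2 S) := (PP d r).map (T : 𝓢(Ed d, ℂ) →ₗ[ℂ] Lp ℂ 2 S)
  have hK : K.topologicalClosure = ⊤ := by
    rw [Submodule.topologicalClosure_eq_top_iff, Submodule.eq_bot_iff]
    intro φ hφ
    refine core S hI hdet r hr0 φ fun k h1 h2 => ?_
    exact Submodule.inner_left_of_mem_orthogonal (K := K) ⟨k, ⟨h1, h2⟩, rfl⟩ hφ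
  have hmem : hf2.toLp (FT f) ∈ closure (K : Set (Lp ℂ 2 S)) := by
    rw [← Submodule.topologicalClosure_coe, hK]
    trivial
  obtain ⟨q, ⟨k, ⟨hk1, hk2⟩, rfl⟩, hq⟩ := Metric.mem_closure_iff.1 hmem (√ε) (Real.sqrt_pos.2 hε)
  refine ⟨fun x => ((((2 * Real.pi)⁻¹ ^ d : ℝ)) : ℂ) * k ((2 * Real.pi)⁻¹ • x), ?_, ?_⟩
  · have hkc := k.continuous
    have hcs : HasCompactSupport
        fun x : Ed d => ((((2 * Real.pi)⁻¹ ^ d : ℝ)) : ℂ) * k ((2 * Real.pi)⁻¹ • x) :=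
      HasCompactSupport.mul_left (hk1.comp_smul (inv_ne_zero hpi.ne'))
    have hc : Continuous
        fun x : Ed d => ((((2 * Real.pi)⁻¹ ^ d : ℝ)) : ℂ) * k ((2 * Real.pi)⁻¹ • x) := by
      fun_prop
    refine ⟨hc.measurable, hcs.exists_bound_of_continuous hc,
      hcs.isCompact.isBounded.subset (subset_tsupport _), ?_⟩
    intro x hx hxA
    apply hx
    have h1 : ‖x‖ < R := by simpa using hR hxA
    have h2 : ‖(2 * Real.pi)⁻¹ • x‖ < r := by
      rw [norm_smul, Real.norm_of_nonneg (by positivity), hr]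
      gcongr
    simp only [hk2 _ h2, mul_zero]
  · simp only [FT_scale]
    have e1 : dist (hf2.toLp (FT f)) (T k) ^ 2 =
        ∫ u, ‖FT f u - 𝓕 (k : Ed d → ℂ) u‖ ^ 2 ∂S := by
      rw [dist_eq_norm, ← Complex.ofReal_inj, Complex.ofReal_pow]
      have := inner_self_eq_norm_sq_to_K (𝕜 := ℂ) (hf2.toLp (FT f) - T k)
      rw [L2.inner_def] at this
      refine this.symm.trans ?_
      rw [← integral_complex_ofReal]
      refine integral_congr_ae ?_
      filter_upwards [Lp.coeFn_sub (hf2.toLp (FT f)) (T k), hf2.coeFn_toLp,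
        SchwartzMap.coeFn_toLp (SchwartzMap.fourierTransformCLM ℂ k) 2 S] with u h1 h2 h3
      have h4 : (T k) u = 𝓕 (k : Ed d → ℂ) u := h3
      rw [h1, Pi.sub_apply, h2, h4, inner_self_eq_norm_sq_to_K]
      simp
    rw [← e1]
    have : dist (hf2.toLp (FT f)) (T k) < √ε := hq
    calc _ < √ε ^ 2 := by gcongr
      _ = ε := Real.sq_sqrt hε.le
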